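/- Every reset word of the Černý automaton C_n (n ≥ 2) contains at least n−1 occurrences of the letter b; in particular, every reset word of C_n has length at least n−1. -/

import Mathlib

/-- The two-letter alphabet of the Černý automaton. -/
inductive Letter
  | a
  | b
deriving DecidableEq

/-- The action of a letter of the Černý automaton `C_n` on the state set `ZMod n`:
`a` sends `i` to `i + 1 (mod n)`, and `b` sends `n - 1` to `0` and fixes every other state. -/
def step (n : ℕ) : Letter → ZMod n → ZMod n
  | Letter.a, p => p + 1
  | Letter.b, p => if p = -1 then 0 else p

/-- The map `δ_w` induced by a word `w`, applying letters left to right. -/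
def run (n : ℕ) : List Letter → ZMod n → ZMod n
  | [], p => p
  | x :: w, p => run n w (step n x p)

lemma card_le_image_run (n : ℕ) (w : List Letter) : ∀ S : Finset (ZMod n),
    S.card ≤ (S.image (run n w)).card + w.count Letter.b := by
  induction w with
  | nil =>
    intro S
    have : run n [] = id := by funext p; rfl
    simp [this]
  | cons x w ih =>
    intro S
    have h := ih (S.image (step n x))
    rw [Finset.image_image] at h
    have e : run n w ∘ step n x = run n (x :: w) := by funext p; rfl
    rw [e] at h
    cases x with
    | a =>
      have hc : (S.image (step n Letter.a)).card = S.card :=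
        Finset.card_image_of_injective _ (fun p q hpq => by simpa [step] using hpq)
      have hn : (Letter.a :: w).count Letter.b = w.count Letter.b := by simp
      omega
    | b =>
      have hsub : S ⊆ insert (-1) (S.image (step n Letter.b)) := by
        intro p hp
        by_cases hp1 : p = -1
        · simp [hp1]
        · exact Finset.mem_insert_of_mem (Finset.mem_image.2 ⟨p, hp, by simp [step, hp1]⟩)
      have h1 := (Finset.card_le_card hsub).trans (Finset.card_insert_le _ _)
      have hn : (Letter.b :: w).count Letter.b = w.count Letter.b + 1 := by simp
      omega

/-- Every reset word of the Černý automaton `C_n` (`n ≥ 2`) contains at least `n - 1`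
occurrences of the letter `b`; in particular, every reset word has length at least
`n - 1`. -/
theorem cerny_reset_word_count_b (n : ℕ) (hn : 2 ≤ n) (w : List Letter)
    (hw : ∃ c : ZMod n, ∀ p : ZMod n, run n w p = c) :
    n - 1 ≤ w.count Letter.b ∧ n - 1 ≤ w.length := by
  obtain ⟨c, hc⟩ := hw
  haveI : NeZero n := ⟨by omega⟩
  have h := card_le_image_run n w Finset.univ
  have h1 : (Finset.univ.image (run n w)).card ≤ 1 := by
    refine (Finset.card_le_card (t := {c}) ?_).trans (by simp)
    intro q hq
    obtain ⟨p, -, rfl⟩ := Finset.mem_image.1 hq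
    simp [hc p]
  rw [Finset.card_univ, ZMod.card] at h
  have h2 : w.count Letter.b ≤ w.length := List.count_le_length
  omega
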